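/- arXiv:1401.6260 — 2 statements merged into one kernel-verified Lean document; each statement's English description precedes it below -/
import Mathlib

section
/- Let S = {s_1,…,s_K} (K ≥ 3) be a protocol sequence set in which all sequences have the same duty factor f = n/d with n, d positive integers, gcd(n, d) = 1 and 0 < f < 1. Suppose S is TI with MPR capability γ = 2 and R_i > 0 for every user i. If gcd(K−2, d) = 1, then S is SI. -/
open Finset

/-- Generalized Hamming cross-correlation of the sequences indexed by `A`
(only the shifts `τ j` with `j ∈ A` matter). -/
def Hcorr {K L : ℕ} [NeZero L] (s : Fin K → ZMod L → ℕ)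
    (A : Finset (Fin K)) (τ : Fin K → ZMod L) : ℕ :=
  ∑ t : ZMod L, ∏ j ∈ A, s j (t + τ j)

/-- The family `s` is shift-invariant (SI): every generalized Hamming
cross-correlation is independent of the relative shifts. -/
def IsSI {K L : ℕ} [NeZero L] (s : Fin K → ZMod L → ℕ) : Prop :=
  ∀ A : Finset (Fin K), A.Nonempty →
    ∀ τ τ' : Fin K → ZMod L, Hcorr s A τ = Hcorr s A τ'

/-- Number of slots `t` in one period where user `i` transmits and at most
`γ - 1` other users transmit. -/
def Rcount {K L : ℕ} [NeZero L] (s : Fin K → ZMod L → ℕ) (γ : ℕ)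
    (i : Fin K) (τ : Fin K → ZMod L) : ℕ :=
  (Finset.univ.filter (fun t : ZMod L =>
    s i (t + τ i) = 1 ∧ ∑ j ∈ Finset.univ.erase i, s j (t + τ j) ≤ γ - 1)).card

/-- Throughput of user `i` under MPR capability `γ` at shifts `τ`. -/
def R {K L : ℕ} [NeZero L] (s : Fin K → ZMod L → ℕ) (γ : ℕ)
    (i : Fin K) (τ : Fin K → ZMod L) : ℚ :=
  (Rcount s γ i τ : ℚ) / L

/-- The family `s` is throughput-invariant (TI) with MPR capability `γ`. -/
def IsTI {K L : ℕ} [NeZero L] (s : Fin K → ZMod L → ℕ) (γ : ℕ) : Prop :=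
  ∀ i : Fin K, ∀ τ τ' : Fin K → ZMod L, R s γ i τ = R s γ i τ'

/-- Duty factor of a single sequence. -/
def duty {L : ℕ} [NeZero L] (s : ZMod L → ℕ) : ℚ :=
  (∑ t : ZMod L, (s t : ℚ)) / L

/-- Correlation of the complemented sequences `u j`. -/
def Ccorr {K L : ℕ} [NeZero L] (u : Fin K → ZMod L → ℚ)
    (B : Finset (Fin K)) (τ : Fin K → ZMod L) : ℚ :=
  ∑ t : ZMod L, ∏ j ∈ B, u j (t + τ j)

lemma Ccorr_avg {K L : ℕ} [NeZero L] (u : Fin K → ZMod L → ℚ) (q : ℚ)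
    (hq : ∀ j, ∑ t, u j t = L * q) (A B : Finset (Fin K)) (τ : Fin K → ZMod L) :
    ∑ σ : Fin K → ZMod L, Ccorr u B (fun j => if j ∈ A then τ j else σ j)
      = (L : ℚ) ^ K * q ^ (B \ A).card * Ccorr u (B ∩ A) τ := by
  unfold Ccorr
  rw [Finset.sum_comm, Finset.mul_sum]
  refine Finset.sum_congr rfl fun t _ => ?_
  have h1 : ∀ σ : Fin K → ZMod L,
      ∏ j ∈ B, u j (t + if j ∈ A then τ j else σ j)
      = ∏ j, (if j ∈ B then u j (t + if j ∈ A then τ j else σ j) else 1) := by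
    intro σ
    rw [Finset.prod_ite_mem]; simp
  simp_rw [h1]
  have h2 := Finset.prod_univ_sum (fun _ : Fin K => (Finset.univ : Finset (ZMod L)))
    (fun j x => (if j ∈ B then u j (t + if j ∈ A then τ j else x) else (1 : ℚ)))
  rw [Fintype.piFinset_univ] at h2
  rw [← h2]
  have h3 : ∀ j, ∑ x : ZMod L, (if j ∈ B then u j (t + if j ∈ A then τ j else x) else (1 : ℚ))
      = L * ((if j ∈ B \ A then q else 1) * (if j ∈ B ∩ A then u j (t + τ j) else 1)) := by
    intro j
    by_cases hB : j ∈ B <;> by_cases hA : j ∈ A <;> simp [hA, hB, ZMod.card]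
    rw [← hq j]
    exact Equiv.sum_comp (Equiv.addLeft t) (u j)
  simp_rw [h3]
  rw [Finset.prod_mul_distrib, Finset.prod_mul_distrib, Finset.prod_ite_mem, Finset.prod_ite_mem]
  simp [mul_assoc]

/-- Pointwise identity for the indicator of user `i` being active with at most one other active. -/
lemma indicator_eq {K : ℕ} (hK : 3 ≤ K) (x : Fin K → ℕ) (hx : ∀ j, x j = 0 ∨ x j = 1)
    (i : Fin K) :
    (if x i = 1 ∧ ∑ j ∈ univ.erase i, x j ≤ 1 then (1 : ℚ) else 0)
     = ∑ k ∈ univ.erase i, ∏ j ∈ (univ.erase i).erase k, (1 - (x j : ℚ))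
       - (K - 2) * ∏ j ∈ univ.erase i, (1 - (x j : ℚ))
       - ∑ k ∈ univ.erase i, ∏ j ∈ univ.erase k, (1 - (x j : ℚ))
       + (K - 2) * ∏ j, (1 - (x j : ℚ)) := by
  have e1 : ∏ j, (1 - (x j : ℚ)) = (1 - (x i : ℚ)) * ∏ j ∈ univ.erase i, (1 - (x j : ℚ)) :=
    (Finset.mul_prod_erase _ _ (mem_univ i)).symm
  have e2 : ∀ k ∈ univ.erase i, ∏ j ∈ univ.erase k, (1 - (x j : ℚ))
      = (1 - (x i : ℚ)) * ∏ j ∈ (univ.erase i).erase k, (1 - (x j : ℚ)) := by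
    intro k hk
    rw [Finset.erase_right_comm]
    refine (Finset.mul_prod_erase _ _ ?_).symm
    simp at hk ⊢
    exact fun h => hk h.symm
  rw [e1, Finset.sum_congr rfl e2, ← Finset.mul_sum]
  rcases hx i with h | h
  · simp [h]
  simp only [h, true_and, Nat.cast_one, sub_self, zero_mul, mul_zero, sub_zero, add_zero]
  by_cases hz : ∀ j ∈ univ.erase i, x j = 0
  · have a1 : ∑ j ∈ univ.erase i, x j = 0 := Finset.sum_eq_zero hz
    have a2 : ∏ j ∈ univ.erase i, (1 - (x j : ℚ)) = 1 :=
      Finset.prod_eq_one fun j hj => by simp [hz j hj]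
    have a3 : ∀ k ∈ univ.erase i, ∏ j ∈ (univ.erase i).erase k, (1 - (x j : ℚ)) = 1 :=
      fun k _ => Finset.prod_eq_one fun j hj => by simp [hz j (Finset.mem_of_mem_erase hj)]
    rw [a1, a2, Finset.sum_congr rfl a3]
    have : ((K - 1 : ℕ) : ℚ) = K - 1 := by rw [Nat.cast_sub (by omega)]; simp
    simp [this]; norm_num
  · push Not at hz
    obtain ⟨a, ha, hxa⟩ := hz
    have hxa1 : x a = 1 := (hx a).resolve_left hxa
    have a2 : ∏ j ∈ univ.erase i, (1 - (x j : ℚ)) = 0 :=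
      Finset.prod_eq_zero ha (by simp [hxa1])
    have a3 : ∑ k ∈ univ.erase i, ∏ j ∈ (univ.erase i).erase k, (1 - (x j : ℚ))
        = ∏ j ∈ (univ.erase i).erase a, (1 - (x j : ℚ)) := by
      refine Finset.sum_eq_single_of_mem a ha fun k _ hka => ?_
      exact Finset.prod_eq_zero (Finset.mem_erase.2 ⟨hka.symm, ha⟩) (by simp [hxa1])
    rw [a2, a3, ← Finset.add_sum_erase _ _ ha, hxa1]
    by_cases hw : ∀ j ∈ (univ.erase i).erase a, x j = 0
    · rw [Finset.sum_eq_zero hw, Finset.prod_eq_one fun j hj => by simp [hw j hj]]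
      simp
    · push Not at hw
      obtain ⟨b, hb, hxb⟩ := hw
      have hxb1 : x b = 1 := (hx b).resolve_left hxb
      rw [Finset.prod_eq_zero hb (by simp [hxb1]), ← Finset.add_sum_erase _ _ hb, hxb1]
      rw [if_neg (by omega)]; simp

lemma Rcount_eq {K L : ℕ} [NeZero L] (hK : 3 ≤ K)
    (s : Fin K → ZMod L → ℕ) (hbin : ∀ i t, s i t = 0 ∨ s i t = 1)
    (u : Fin K → ZMod L → ℚ) (hu : ∀ j t, u j t = 1 - (s j t : ℚ))
    (i : Fin K) (τ : Fin K → ZMod L) :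
    (Rcount s 2 i τ : ℚ) = ∑ k ∈ univ.erase i, Ccorr u ((univ.erase i).erase k) τ
       - (K - 2) * Ccorr u (univ.erase i) τ
       - ∑ k ∈ univ.erase i, Ccorr u (univ.erase k) τ
       + (K - 2) * Ccorr u univ τ := by
  unfold Rcount Ccorr
  rw [Finset.card_filter]
  push_cast
  rw [Finset.sum_comm (s := univ.erase i), Finset.sum_comm (s := univ.erase i),
    Finset.mul_sum, Finset.mul_sum,
    ← Finset.sum_sub_distrib, ← Finset.sum_sub_distrib, ← Finset.sum_add_distrib]
  refine Finset.sum_congr rfl fun t _ => ?_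
  simp_rw [hu]
  exact indicator_eq hK (fun j => s j (t + τ j)) (fun j => hbin j _) i

lemma coef_ne {K : ℕ} (hK : 3 ≤ K) (n d : ℕ) (hn : 0 < n) (hd : 0 < d) (hnd : n < d)
    (hcop : Nat.Coprime n d) (hgcd : Nat.gcd (K - 2) d = 1) (N : ℕ) :
    ((K : ℚ) - 2) * (1 - (n : ℚ) / d) ^ N - N * (1 - (n : ℚ) / d) ^ (N - 1) ≠ 0 := by
  have hd' : (d : ℚ) ≠ 0 := by positivity
  have hq : (1 - (n : ℚ) / d) ≠ 0 := by
    have : (n : ℚ) < d := by exact_mod_cast hnd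
    intro h
    have h1 : (n : ℚ) / d = 1 := by linarith
    rw [div_eq_one_iff_eq hd'] at h1
    linarith
  have hKq : ((K - 2 : ℕ) : ℚ) = K - 2 := by rw [Nat.cast_sub (by omega)]; simp
  rcases N with _ | N
  · have : (3 : ℚ) ≤ K := by exact_mod_cast hK
    simp
    intro h
    linarith
  intro h
  rw [Nat.add_sub_cancel, pow_succ] at h
  have h2 : (1 - (n : ℚ) / d) ^ N * ((K - 2) * (1 - (n : ℚ) / d) - ((N + 1 : ℕ) : ℚ)) = 0 := by
    linear_combination h
  have h3 := (mul_eq_zero.1 h2).resolve_left (pow_ne_zero _ hq)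
  rw [← hKq] at h3
  have h4 : (((K - 2 : ℕ) : ℚ)) * d = (K - 2 : ℕ) * n + d * ((N + 1 : ℕ) : ℚ) := by
    field_simp at h3
    linear_combination h3
  have h5 : (K - 2) * d = (K - 2) * n + d * (N + 1) := by exact_mod_cast h4
  have h6 : d ∣ (K - 2) * n := by
    refine (Nat.dvd_add_left (Dvd.intro (N + 1) rfl)).1 (h5 ▸ Dvd.intro_left _ rfl)
  have h7 : d ∣ K - 2 := Nat.Coprime.dvd_of_dvd_mul_right hcop.symm h6
  have h8 : d ∣ 1 := hgcd ▸ Nat.dvd_gcd h7 dvd_rfl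
  have := Nat.le_of_dvd one_pos h8
  omega

lemma Ccorr_const {K L : ℕ} [NeZero L] (u : Fin K → ZMod L → ℚ) (q : ℚ)
    (hq : ∀ j, ∑ t, u j t = L * q)
    (hc : ∀ N : ℕ, ((K : ℚ) - 2) * q ^ N - N * q ^ (N - 1) ≠ 0)
    (hF : ∀ i : Fin K, ∀ τ τ' : Fin K → ZMod L,
      ∑ k ∈ univ.erase i, Ccorr u ((univ.erase i).erase k) τ
       - (K - 2) * Ccorr u (univ.erase i) τ
       - ∑ k ∈ univ.erase i, Ccorr u (univ.erase k) τ
       + (K - 2) * Ccorr u univ τ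
      = ∑ k ∈ univ.erase i, Ccorr u ((univ.erase i).erase k) τ'
       - (K - 2) * Ccorr u (univ.erase i) τ'
       - ∑ k ∈ univ.erase i, Ccorr u (univ.erase k) τ'
       + (K - 2) * Ccorr u univ τ')
    (A : Finset (Fin K)) : ∀ τ τ', Ccorr u A τ = Ccorr u A τ' := by
  induction A using Finset.strongInduction with
  | H A ih =>
  intro τ τ'
  rcases A.eq_empty_or_nonempty with rfl | ⟨i, hi⟩
  · simp [Ccorr]
  have hL : (L : ℚ) ^ K ≠ 0 := pow_ne_zero _ (by exact_mod_cast NeZero.ne L)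
  have key := Finset.sum_congr (rfl : (univ : Finset (Fin K → ZMod L)) = univ) fun σ _ =>
    hF i (fun j => if j ∈ A then τ j else σ j) (fun j => if j ∈ A then τ' j else σ j)
  simp only [Finset.sum_add_distrib, Finset.sum_sub_distrib, ← Finset.mul_sum] at key
  simp only [Finset.sum_comm (s := (univ : Finset (Fin K → ZMod L)))] at key
  simp only [Ccorr_avg u q hq] at key
  have m1 : ∀ k, Ccorr u ((univ.erase i).erase k ∩ A) τ = Ccorr u ((univ.erase i).erase k ∩ A) τ' := by
    intro k
    refine ih _ (Finset.ssubset_iff_subset_ne.2 ⟨Finset.inter_subset_right, fun h => ?_⟩) τ τ'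
    rw [← h] at hi; simp at hi
  have m2 : Ccorr u (univ.erase i ∩ A) τ = Ccorr u (univ.erase i ∩ A) τ' := by
    refine ih _ (Finset.ssubset_iff_subset_ne.2 ⟨Finset.inter_subset_right, fun h => ?_⟩) τ τ'
    rw [← h] at hi; simp at hi
  rw [m2] at key
  simp only [m1] at key
  have m3 : ∀ k, Ccorr u (univ.erase k ∩ A) τ - Ccorr u (univ.erase k ∩ A) τ'
      = if k ∈ A then 0 else Ccorr u A τ - Ccorr u A τ' := by
    intro k
    split_ifs with hk
    · rw [sub_eq_zero]
      refine ih _ (Finset.ssubset_iff_subset_ne.2 ⟨Finset.inter_subset_right, fun h => ?_⟩) τ τ'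
      rw [← h] at hk; simp at hk
    · have : univ.erase k ∩ A = A := by
        ext j; simp; rintro hj rfl; exact hk hj
      rw [this]
  have m4 : ∑ k ∈ univ.erase i, (L : ℚ) ^ K * q ^ (univ.erase k \ A).card * Ccorr u (univ.erase k ∩ A) τ
      - ∑ k ∈ univ.erase i, (L : ℚ) ^ K * q ^ (univ.erase k \ A).card * Ccorr u (univ.erase k ∩ A) τ'
      = (L : ℚ) ^ K * ((Aᶜ.card : ℚ) * q ^ (Aᶜ.card - 1)) * (Ccorr u A τ - Ccorr u A τ') := by
    rw [← Finset.sum_sub_distrib]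
    simp_rw [← mul_sub, m3]
    have hs : ∀ k ∈ Aᶜ, (univ.erase k \ A).card = Aᶜ.card - 1 := by
      intro k hk
      rw [← Finset.card_erase_of_mem hk]
      congr 1
      ext j; simp
    have hsub : Aᶜ ⊆ univ.erase i := by
      intro k hk
      simp at hk ⊢
      rintro rfl; exact hk hi
    rw [← Finset.sum_subset hsub (fun k _ hk => by simp at hk; simp [hk])]
    rw [Finset.sum_congr rfl (g := fun _ => (L : ℚ) ^ K * q ^ (Aᶜ.card - 1) * (Ccorr u A τ - Ccorr u A τ'))]
    · simp only [Finset.sum_const, nsmul_eq_mul]; ring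
    · intro k hk
      rw [hs k hk, if_neg (Finset.mem_compl.1 hk)]
  rw [Finset.univ_inter, ← Finset.compl_eq_univ_sdiff] at key
  have : (L : ℚ) ^ K * (((K : ℚ) - 2) * q ^ Aᶜ.card - Aᶜ.card * q ^ (Aᶜ.card - 1))
      * (Ccorr u A τ - Ccorr u A τ') = 0 := by
    linear_combination key + m4
  exact sub_eq_zero.1 ((mul_eq_zero.1 this).resolve_left (mul_ne_zero hL (hc _)))

theorem stmt15 (K L : ℕ) (hK : 3 ≤ K) (hL : 1 ≤ L) [NeZero L]
    (s : Fin K → ZMod L → ℕ) (hbin : ∀ i t, s i t = 0 ∨ s i t = 1)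
    (n d : ℕ) (hn : 0 < n) (hd : 0 < d) (hcop : Nat.Coprime n d)
    (hf0 : 0 < (n : ℚ) / (d : ℚ)) (hf1 : (n : ℚ) / (d : ℚ) < 1)
    (hduty : ∀ i, duty (s i) = (n : ℚ) / (d : ℚ))
    (hTI : IsTI s 2)
    (hR : ∀ (i : Fin K) (τ : Fin K → ZMod L), 0 < R s 2 i τ)
    (hgcd : Nat.gcd (K - 2) d = 1) :
    IsSI s := by
  have hd' : (d : ℚ) ≠ 0 := by positivity
  have hL' : (L : ℚ) ≠ 0 := by exact_mod_cast NeZero.ne L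
  have hnd : n < d := by
    rw [div_lt_one (by positivity)] at hf1
    exact_mod_cast hf1
  have hC := Ccorr_const (fun j t => 1 - (s j t : ℚ)) (1 - (n : ℚ) / d)
    (by
      intro j
      have := hduty j
      unfold duty at this
      rw [div_eq_iff hL'] at this
      simp [this, ZMod.card]; ring)
    (coef_ne hK n d hn hd hnd hcop hgcd)
    (by
      intro i τ τ'
      rw [← Rcount_eq hK s hbin _ (fun _ _ => rfl), ← Rcount_eq hK s hbin _ (fun _ _ => rfl)]
      have := hTI i τ τ'
      unfold R at this
      exact (div_left_inj' hL').1 this)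
  intro A _ τ τ'
  have hH : ∀ τ, (Hcorr s A τ : ℚ)
      = ∑ B ∈ A.powerset, (-1) ^ B.card * Ccorr (fun j t => 1 - (s j t : ℚ)) B τ := by
    intro τ
    unfold Hcorr Ccorr
    push_cast
    simp_rw [Finset.mul_sum]
    rw [Finset.sum_comm]
    refine Finset.sum_congr rfl fun t _ => ?_
    have h := Finset.prod_sub (fun _ => (1 : ℚ)) (fun j => 1 - (s j (t + τ j) : ℚ)) A
    simpa using h
  have : (Hcorr s A τ : ℚ) = Hcorr s A τ' := by
    rw [hH, hH]
    exact Finset.sum_congr rfl fun B _ => by rw [hC B τ τ']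
  exact_mod_cast this
end

section
/- Let S = {s_1,…,s_K} (K ≥ 4) be a protocol sequence set in which all sequences have the same duty factor f = n/d with n, d positive integers, gcd(n, d) = 1 and 0 < f < 1. Suppose S is TI with MPR capability γ = 3 and R_i > 0 for every user i. If (i) K−3 is a prime number, (ii) K−2 is even, and (iii) gcd((K−2)/2, d) = 1, then S is SI. -/
open Finset

open Polynomial in
/-- Sum of the first three coefficients. -/
noncomputable def psi (p : ℚ[X]) : ℚ := p.coeff 0 + p.coeff 1 + p.coeff 2

open Polynomial in
/-- The generating polynomial of a Bernoulli variable. -/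
noncomputable def qpol (f : ℚ) : ℚ[X] := C (1 - f) + C f * X

open Polynomial in
lemma psi_sum {ι : Type*} (S : Finset ι) (F : ι → ℚ[X]) :
    psi (∑ i ∈ S, F i) = ∑ i ∈ S, psi (F i) := by
  simp only [psi, Polynomial.finsetSum_coeff, Finset.sum_add_distrib]

open Polynomial in
lemma psi_C_mul (c : ℚ) (p : ℚ[X]) : psi (C c * p) = c * psi p := by
  simp only [psi, Polynomial.coeff_C_mul]; ring

open Polynomial in
lemma psi_X_pow (m : ℕ) : psi ((X : ℚ[X]) ^ m) = if m ≤ 2 then 1 else 0 := by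
  simp only [psi, Polynomial.coeff_X_pow]
  rcases m with _ | _ | _ | m <;> simp

open Polynomial in
lemma coeff_lin_mul (α β : ℚ) (p : ℚ[X]) (k : ℕ) :
    ((C α + C β * X) * p).coeff (k + 1) = α * p.coeff (k + 1) + β * p.coeff k := by
  rw [add_mul, mul_assoc, coeff_add, coeff_C_mul, coeff_C_mul, coeff_X_mul]

open Polynomial in
lemma coeff_lin_mul_zero (α β : ℚ) (p : ℚ[X]) :
    ((C α + C β * X) * p).coeff 0 = α * p.coeff 0 := by
  simp [mul_coeff_zero]

open Polynomial in
lemma X_sub_one_eq : (X - 1 : ℚ[X]) = C (-1) + C 1 * X := by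
  simp; ring

open Polynomial in
lemma psi_X_sub_one_mul (p : ℚ[X]) : psi ((X - 1) * p) = - p.coeff 2 := by
  rw [X_sub_one_eq]
  simp only [psi]
  rw [coeff_lin_mul, coeff_lin_mul, coeff_lin_mul_zero]; ring

open Polynomial in
lemma coeff_two_top (m : ℕ) : ((X - 1 : ℚ[X]) ^ (m + 2)).coeff 2 ≠ 0 := by
  have h : (X - 1 : ℚ[X]) = X + C (-1) := by simp; ring
  rw [h, coeff_X_add_C_pow]
  have : (m + 2).choose 2 ≠ 0 := (Nat.choose_pos (by omega)).ne'
  simp [this]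

open Polynomial in
/-- No common root. -/
lemma not_both (f : ℚ) (h0 : 0 < f) (h1 : f < 1) (b N : ℕ) (hbN : 1 ≤ b + N)
    (hu : ((X - 1) ^ b * qpol f ^ (N + 1)).coeff 2 = 0)
    (hv : ((X - 1) ^ (b + 1) * qpol f ^ N).coeff 2 = 0) : False := by
  set P : ℚ[X] := (X - 1) ^ b * qpol f ^ N with hP
  have eu : (X - 1) ^ b * qpol f ^ (N + 1) = (C (1 - f) + C f * X) * P := by
    rw [hP, pow_succ, ← qpol]; ring
  have ev : (X - 1) ^ (b + 1) * qpol f ^ N = (C (-1) + C 1 * X) * P := by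
    rw [hP, pow_succ, ← X_sub_one_eq]; ring
  rw [eu, coeff_lin_mul] at hu
  rw [ev, coeff_lin_mul] at hv
  norm_num at hu hv
  have p1 : P.coeff 1 = 0 := by linear_combination hu + (1 - f) * hv
  have p2 : P.coeff 2 = 0 := by linear_combination p1 - hv
  have p0 : P.coeff 0 ≠ 0 := by
    rw [coeff_zero_eq_eval_zero, hP]
    simp only [qpol, eval_mul, eval_pow, eval_sub, eval_X, eval_one, eval_add, eval_C]
    have : (1 - f) ≠ 0 := by linarith
    simp [this]
  have key : (X - 1) * (qpol f * derivative P)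
      = (C (b : ℚ) * qpol f + C (N * f) * (X - 1)) * P := by
    have hq : derivative (qpol f) = C f := by simp [qpol]
    rw [hP, derivative_mul, derivative_pow, derivative_pow, hq]
    simp only [derivative_sub, derivative_X, derivative_one, sub_zero, mul_one, C_mul]
    rcases b with _ | b <;> rcases N with _ | N <;> simp [pow_succ] <;> ring
  have e2 : (C (b : ℚ) * qpol f + C (N * f) * (X - 1))
      = C (b * (1 - f) - N * f) + C ((b + N) * f) * X := by
    simp only [qpol, C_mul, C_add, C_sub, C_1]; ring
  have d0 : (derivative P).coeff 0 = 0 := by rw [coeff_derivative]; simp [p1]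
  have d1 : (derivative P).coeff 1 = 0 := by rw [coeff_derivative]; simp [p2]
  have h := congrArg (fun p => coeff p (0 + 1)) key
  rw [e2, coeff_lin_mul, X_sub_one_eq, coeff_lin_mul, qpol, coeff_lin_mul, coeff_lin_mul_zero] at h
  simp only [zero_add, d0, d1, p1] at h
  have hb : ((b : ℚ) + N) ≠ 0 := by
    have : (1 : ℚ) ≤ (b : ℚ) + N := by exact_mod_cast hbN
    linarith
  have : (b + N : ℚ) * f * P.coeff 0 = 0 := by linear_combination -h
  simp [hb, h0.ne', p0] at this

/-- Centered correlation. -/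
def Gcorr {K L : ℕ} [NeZero L] (g : Fin K → ZMod L → ℚ)
    (A : Finset (Fin K)) (τ : Fin K → ZMod L) : ℚ :=
  ∑ t : ZMod L, ∏ j ∈ A, g j (t + τ j)

lemma Gcorr_sum_shift {K L : ℕ} [NeZero L] (g : Fin K → ZMod L → ℚ)
    (hg : ∀ j, ∑ t, g j t = 0) (A : Finset (Fin K)) (j : Fin K) (hj : j ∈ A)
    (τ : Fin K → ZMod L) : ∑ x, Gcorr g A (τ + Pi.single j x) = 0 := by
  unfold Gcorr
  rw [Finset.sum_comm]
  refine Finset.sum_eq_zero fun t _ => ?_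
  have h : ∀ x : ZMod L, ∏ k ∈ A, g k (t + (τ + Pi.single j x : Fin K → ZMod L) k)
      = g j ((t + τ j) + x) * ∏ k ∈ A.erase j, g k (t + τ k) := by
    intro x
    rw [← Finset.mul_prod_erase A _ hj]
    congr 1
    · simp [add_assoc]
    · refine Finset.prod_congr rfl fun k hk => ?_
      simp [Finset.ne_of_mem_erase hk]
  simp only [h]
  have h3 : ∑ x, g j ((t + τ j) + x) = 0 :=
    (Equiv.sum_comp (Equiv.addLeft (t + τ j)) (g j)).trans (hg j)
  rw [← Finset.sum_mul, h3, zero_mul]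

lemma Gcorr_orth {K L : ℕ} [NeZero L] (g : Fin K → ZMod L → ℚ)
    (hg : ∀ j, ∑ t, g j t = 0) (A : Finset (Fin K)) (j : Fin K) (hj : j ∈ A)
    (F : (Fin K → ZMod L) → ℚ) (hF : ∀ τ x, F (τ + Pi.single j x) = F τ) :
    ∑ τ, F τ * Gcorr g A τ = 0 := by
  have h1 : ∀ x : ZMod L, ∑ τ, F τ * Gcorr g A (τ + Pi.single j x)
      = ∑ τ, F τ * Gcorr g A τ := by
    intro x
    rw [← Equiv.sum_comp (Equiv.addRight (Pi.single j x : Fin K → ZMod L))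
      (fun τ => F τ * Gcorr g A τ)]
    refine Finset.sum_congr rfl fun τ _ => ?_
    simp [hF]
  have h2 : ∑ x : ZMod L, ∑ τ, F τ * Gcorr g A (τ + Pi.single j x) = 0 := by
    rw [Finset.sum_comm]
    refine Finset.sum_eq_zero fun τ _ => ?_
    rw [← Finset.mul_sum, Gcorr_sum_shift g hg A j hj, mul_zero]
  simp only [h1, Finset.sum_const, Finset.card_univ, ZMod.card, nsmul_eq_mul] at h2
  rcases mul_eq_zero.1 h2 with h | h
  · exact absurd h (by exact_mod_cast NeZero.ne L)
  · exact h

lemma Gcorr_indep {K L : ℕ} [NeZero L] (g : Fin K → ZMod L → ℚ)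
    (A : Finset (Fin K)) (j : Fin K) (hj : j ∉ A) (τ : Fin K → ZMod L) (x : ZMod L) :
    Gcorr g A (τ + Pi.single j x) = Gcorr g A τ := by
  unfold Gcorr
  refine Finset.sum_congr rfl fun t _ => Finset.prod_congr rfl fun k hk => ?_
  have : k ≠ j := fun h => hj (h ▸ hk)
  simp [this]

lemma Gcorr_orth_pair {K L : ℕ} [NeZero L] (g : Fin K → ZMod L → ℚ)
    (hg : ∀ j, ∑ t, g j t = 0) (A B : Finset (Fin K)) (hAB : A ≠ B) :
    ∑ τ, Gcorr g A τ * Gcorr g B τ = 0 := by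
  by_cases h : B ⊆ A
  · have : ¬ A ⊆ B := fun h' => hAB (h'.antisymm h)
    obtain ⟨j, hjA, hjB⟩ := Finset.not_subset.1 this
    have := Gcorr_orth g hg A j hjA (Gcorr g B) (Gcorr_indep g B j hjB)
    simpa [mul_comm] using this
  · obtain ⟨j, hjB, hjA⟩ := Finset.not_subset.1 h
    exact Gcorr_orth g hg B j hjB (Gcorr g A) (Gcorr_indep g A j hjA)

/-- A constant combination of centered correlations has vanishing components. -/
lemma Gcorr_extract {K L : ℕ} [NeZero L] (g : Fin K → ZMod L → ℚ)
    (hg : ∀ j, ∑ t, g j t = 0) (w : Finset (Fin K) → ℚ) (c : ℚ)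
    (h : ∀ τ, ∑ A, w A * Gcorr g A τ = c) (B : Finset (Fin K)) (hB : B.Nonempty)
    (hw : w B ≠ 0) (τ : Fin K → ZMod L) : Gcorr g B τ = 0 := by
  obtain ⟨j, hj⟩ := hB
  have h1 : ∑ τ, c * Gcorr g B τ = 0 := Gcorr_orth g hg B j hj (fun _ => c) (fun _ _ => rfl)
  have h2 : ∑ τ, (∑ A, w A * Gcorr g A τ) * Gcorr g B τ = 0 := by
    simpa only [h] using h1
  simp only [Finset.sum_mul] at h2
  rw [Finset.sum_comm, Finset.sum_eq_single B] at h2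
  · simp only [mul_assoc, ← Finset.mul_sum] at h2
    have h3 := (mul_eq_zero.1 h2).resolve_left hw
    rw [Finset.sum_eq_zero_iff_of_nonneg (fun _ _ => mul_self_nonneg _)] at h3
    exact mul_self_eq_zero.1 (h3 τ (Finset.mem_univ _))
  · intro A _ hA
    simp only [mul_assoc, ← Finset.mul_sum]
    rw [Gcorr_orth_pair g hg A B hA, mul_zero]
  · simp

open Polynomial in
/-- Weights of the expansion. -/
noncomputable def wt (f : ℚ) (K : ℕ) (k : ℕ) : ℚ := psi ((X - 1) ^ k * qpol f ^ (K - 1 - k))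

open Polynomial in
lemma indicator_expand {K : ℕ} (f : ℚ) (x : Fin K → ℕ) (hx : ∀ j, x j = 0 ∨ x j = 1)
    (i : Fin K) :
    (if ∑ j ∈ Finset.univ.erase i, x j ≤ 2 then (1 : ℚ) else 0)
      = ∑ A ∈ (Finset.univ.erase i).powerset, wt f K A.card * ∏ j ∈ A, ((x j : ℚ) - f) := by
  rw [← psi_X_pow, ← Finset.prod_pow_eq_pow_sum]
  have h : ∀ j ∈ Finset.univ.erase i, (X : ℚ[X]) ^ x j
      = C ((x j : ℚ) - f) * (X - 1) + qpol f := by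
    intro j _
    rcases hx j with h | h <;> simp [h, qpol] <;> ring
  rw [Finset.prod_congr rfl h, Finset.prod_add, psi_sum]
  refine Finset.sum_congr rfl fun A hA => ?_
  rw [Finset.prod_mul_distrib, Finset.prod_const, Finset.prod_const, ← map_prod, mul_assoc,
    psi_C_mul, mul_comm, wt, Finset.card_sdiff_of_subset (Finset.mem_powerset.1 hA)]
  simp

lemma Rcount_expand {K L : ℕ} [NeZero L] (s : Fin K → ZMod L → ℕ)
    (hbin : ∀ i t, s i t = 0 ∨ s i t = 1) (f : ℚ) (i : Fin K) (τ : Fin K → ZMod L) :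
    ∑ A, (if i ∈ A then wt f K (A.card - 1) else f * wt f K A.card)
        * Gcorr (fun j t => (s j t : ℚ) - f) A τ = (Rcount s 3 i τ : ℚ) := by
  have h1 : (Rcount s 3 i τ : ℚ) = ∑ t : ZMod L, (s i (t + τ i) : ℚ) *
      (if ∑ j ∈ Finset.univ.erase i, s j (t + τ j) ≤ 2 then (1 : ℚ) else 0) := by
    unfold Rcount
    rw [Finset.card_filter]
    push_cast
    refine Finset.sum_congr rfl fun t _ => ?_
    rcases hbin i (t + τ i) with h | h <;> simp [h]
  rw [h1]
  simp only [Gcorr, Finset.mul_sum]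
  rw [Finset.sum_comm]
  refine Finset.sum_congr rfl fun t _ => ?_
  rw [indicator_expand f (fun j => s j (t + τ j)) (fun j => hbin _ _) i]
  rw [← Finset.powerset_univ, ← Finset.insert_erase (Finset.mem_univ i),
    Finset.sum_powerset_insert (Finset.notMem_erase i _), Finset.mul_sum, ← Finset.sum_add_distrib]
  rw [Finset.insert_erase (Finset.mem_univ i)]
  refine Finset.sum_congr rfl fun A hA => ?_
  have hi : i ∉ A := fun h => Finset.notMem_erase i _ (Finset.mem_powerset.1 hA h)
  rw [Finset.prod_insert hi]
  simp [hi]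
  ring

theorem stmt16 (K L : ℕ) (hK : 4 ≤ K) (hL : 1 ≤ L) [NeZero L]
    (s : Fin K → ZMod L → ℕ) (hbin : ∀ i t, s i t = 0 ∨ s i t = 1)
    (n d : ℕ) (hn : 0 < n) (hd : 0 < d) (hcop : Nat.Coprime n d)
    (hf0 : 0 < (n : ℚ) / (d : ℚ)) (hf1 : (n : ℚ) / (d : ℚ) < 1)
    (hduty : ∀ i, duty (s i) = (n : ℚ) / (d : ℚ))
    (hTI : IsTI s 3)
    (hR : ∀ (i : Fin K) (τ : Fin K → ZMod L), 0 < R s 3 i τ)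
    (hprime : Nat.Prime (K - 3)) (heven : Even (K - 2))
    (hgcd : Nat.gcd ((K - 2) / 2) d = 1) :
    IsSI s := by
  have key : ∀ B : Finset (Fin K), B.Nonempty → ∀ τ,
      Gcorr (fun j t => (s j t : ℚ) - (n : ℚ) / d) B τ = 0 := by
    set f : ℚ := (n : ℚ) / d with hf
    have hL0 : (L : ℚ) ≠ 0 := by exact_mod_cast NeZero.ne L
    have hg : ∀ j, ∑ t, ((s j t : ℚ) - f) = 0 := by
      intro j
      have := hduty j
      unfold duty at this
      rw [div_eq_iff hL0] at this
      rw [Finset.sum_sub_distrib, this]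
      simp [ZMod.card]; ring
    intro B hB τ
    have ext : ∀ i, (if i ∈ B then wt f K (B.card - 1) else f * wt f K B.card) ≠ 0 →
        Gcorr (fun j t => (s j t : ℚ) - f) B τ = 0 := by
      intro i hw
      refine Gcorr_extract _ hg
        (fun A => if i ∈ A then wt f K (A.card - 1) else f * wt f K A.card)
        (Rcount s 3 i 0 : ℚ) (fun τ => ?_) B hB hw τ
      rw [Rcount_expand s hbin f i τ]
      have := hTI i τ 0
      unfold R at this
      exact (div_left_inj' hL0).1 this
    by_contra hne
    have hw : ∀ i, (if i ∈ B then wt f K (B.card - 1) else f * wt f K B.card) = 0 :=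
      fun i => by_contra fun h => hne (ext i h)
    obtain ⟨i, hi⟩ := hB
    have hwi := hw i
    rw [if_pos hi] at hwi
    have hcardle : B.card ≤ K := by simpa using Finset.card_le_univ B
    have hpos : 0 < B.card := Finset.card_pos.2 ⟨i, hi⟩
    obtain hc1 | ⟨b, hb⟩ : B.card = 1 ∨ ∃ b, B.card = b + 2 := by
      rcases h : B.card with _ | _ | b
      · omega
      · left; rfl
      · right; exact ⟨b, rfl⟩
    · obtain ⟨k, rfl⟩ := Finset.card_eq_one.1 hc1
      apply hne
      unfold Gcorr
      simp only [Finset.prod_singleton]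
      exact (Equiv.sum_comp (Equiv.addRight (τ k)) (fun t => (s k t : ℚ) - f)).trans (hg k)
    · have e1 : B.card - 1 = b + 1 := by omega
      rw [e1, wt, pow_succ', mul_assoc, psi_X_sub_one_mul, neg_eq_zero] at hwi
      rcases hcardle.eq_or_lt with hK' | hK'
      · have : K - 1 - (b + 1) = 0 := by omega
        rw [this, pow_zero, mul_one] at hwi
        obtain ⟨m, rfl⟩ : ∃ m, b = m + 2 := ⟨b - 2, by omega⟩
        exact coeff_two_top m hwi
      · obtain ⟨k, hk⟩ : ∃ k, k ∉ B := by
          by_contra! h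
          have : B = Finset.univ := Finset.eq_univ_iff_forall.2 h
          rw [this] at hK'
          simp at hK'
        have hwk := hw k
        rw [if_neg hk, mul_eq_zero, or_iff_right hf0.ne', hb, wt, pow_succ', mul_assoc,
          psi_X_sub_one_mul, neg_eq_zero] at hwk
        obtain ⟨N, hN⟩ : ∃ N, K = b + 3 + N := ⟨K - (b + 3), by omega⟩
        have e2 : K - 1 - (b + 1) = N + 1 := by omega
        have e3 : K - 1 - (b + 2) = N := by omega
        rw [e2] at hwi
        rw [e3] at hwk
        exact not_both f hf0 hf1 b N (by omega) hwi hwk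
  have hH : ∀ A τ, (Hcorr s A τ : ℚ) = ((n : ℚ) / d) ^ A.card * L := by
    intro A τ
    have h1 : (Hcorr s A τ : ℚ)
        = ∑ B ∈ A.powerset, ((n : ℚ) / d) ^ (A \ B).card *
          Gcorr (fun j t => (s j t : ℚ) - (n : ℚ) / d) B τ := by
      unfold Hcorr Gcorr
      push_cast
      simp only [Finset.mul_sum]
      rw [Finset.sum_comm]
      refine Finset.sum_congr rfl fun t _ => ?_
      have : ∀ j ∈ A, (s j (t + τ j) : ℚ)
          = ((s j (t + τ j) : ℚ) - (n : ℚ) / d) + (n : ℚ) / d := fun j _ => by ring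
      rw [Finset.prod_congr rfl this, Finset.prod_add]
      refine Finset.sum_congr rfl fun B _ => ?_
      rw [Finset.prod_const, mul_comm]
    rw [h1, Finset.sum_eq_single ∅]
    · simp [Gcorr, ZMod.card]
    · intro B _ hB
      rw [key B (Finset.nonempty_iff_ne_empty.2 hB), mul_zero]
    · simp
  intro A _ τ τ'
  have := (hH A τ).trans (hH A τ').symm
  exact_mod_cast this
end
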